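/- Define W : ℤ≥0 × ℤ≥0 → ℤ × ℤ by W(p, q) = (-q, p - 5q) if p ≥ 2q, W(p, q) = (q - p, q - 2p) if q/2 ≤ p ≤ 2q, and W(p, q) = (p, q - 2p) if 2p ≤ q. Then: (i) the three formulas agree on the overlaps of their domains (i.e. when p = 2q and when q = 2p), so W is well defined; (ii) W(p, 0) = W(0, p) = (0, p) for all p; and (iii) W descends to a bijection from the quotient of ℤ≥0 × ℤ≥0 by the identifications (p, 0) ∼ (0, p) onto ℤ × ℤ. -/

import Mathlib

/-- The piecewise linear map `W_{T₀}` of the fundamental bijection for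
`(ℂP², N₀)` with its standard toric model: `W (p, q) = (-q, p - 5q)` if `p ≥ 2q`,
`W (p, q) = (q - p, q - 2p)` if `q/2 ≤ p ≤ 2q`, and `W (p, q) = (p, q - 2p)` if
`2p ≤ q`. -/
noncomputable def Wmap : ℕ × ℕ → ℤ × ℤ := fun x =>
  if 2 * x.2 ≤ x.1 then (-(x.2 : ℤ), (x.1 : ℤ) - 5 * (x.2 : ℤ))
  else if 2 * x.1 ≤ x.2 then ((x.1 : ℤ), (x.2 : ℤ) - 2 * (x.1 : ℤ))
  else ((x.2 : ℤ) - (x.1 : ℤ), (x.2 : ℤ) - 2 * (x.1 : ℤ))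

/-!
`W` is unimodular on each of the three closed cones `2q ≤ p`, `q/2 ≤ p ≤ 2q` and `2p ≤ q`, and it
sends them onto the cones `{x ≤ 0, 3x ≤ y}`, `{y ≤ 0, y ≤ 3x}` and `{0 ≤ x, 0 ≤ y}`. These cover
`ℤ × ℤ` and overlap only along their common boundary rays: two of these are the images of `p = 2q`
and `q = 2p`, and the third, `{x = 0, 0 ≤ y}`, is the image of both coordinate axes. Inverting `W`
cone by cone therefore recovers a point up to the identification of `(p, 0)` with `(0, p)`.
-/

namespace Wmap

theorem formulas_agree_of_fst_eq_two_mul_snd {R : Type*} [CommRing R] {p q : R} (h : p = 2 * q) :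
    (-q, p - 5 * q) = (q - p, q - 2 * p) := by
  subst h
  ext <;> ring

theorem formulas_agree_of_snd_eq_two_mul_fst {R : Type*} [CommRing R] {p q : R} (h : q = 2 * p) :
    (q - p, q - 2 * p) = (p, q - 2 * p) := by
  subst h
  ext <;> ring

theorem apply_of_two_mul_snd_le {p q : ℕ} (h : 2 * q ≤ p) :
    Wmap (p, q) = (-(q : ℤ), (p : ℤ) - 5 * q) :=
  if_pos h

theorem apply_of_two_mul_fst_le {p q : ℕ} (h : 2 * p ≤ q) :
    Wmap (p, q) = ((p : ℤ), (q : ℤ) - 2 * p) := by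
  by_cases hqp : 2 * q ≤ p
  · obtain ⟨rfl, rfl⟩ : p = 0 ∧ q = 0 := by omega
    simp [Wmap]
  · exact (if_neg hqp).trans (if_pos h)

theorem apply_of_le_two_mul {p q : ℕ} (hp : p ≤ 2 * q) (hq : q ≤ 2 * p) :
    Wmap (p, q) = ((q : ℤ) - p, (q : ℤ) - 2 * p) := by
  rcases hp.eq_or_lt with hp | hp
  · rw [apply_of_two_mul_snd_le hp.ge]
    exact formulas_agree_of_fst_eq_two_mul_snd (mod_cast hp)
  rcases hq.eq_or_lt with hq | hq
  · rw [apply_of_two_mul_fst_le hq.ge]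
    exact (formulas_agree_of_snd_eq_two_mul_fst (mod_cast hq)).symm
  · exact (if_neg hp.not_ge).trans (if_neg hq.not_ge)

theorem apply_fst_axis (p : ℕ) : Wmap (p, 0) = (0, (p : ℤ)) := by
  simpa using apply_of_two_mul_snd_le (p := p) (q := 0) (by simp)

theorem apply_snd_axis (p : ℕ) : Wmap (0, p) = (0, (p : ℤ)) := by
  simpa using apply_of_two_mul_fst_le (p := 0) (q := p) (by simp)

/-- The representative of the class of a point modulo `(p, 0) ∼ (0, p)`, chosen on the axis
`p = 0` when the class consists of axis points. -/
def canonicalRep (a : ℕ × ℕ) : ℕ × ℕ :=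
  if a.2 = 0 then (0, a.1) else a

theorem canonicalRep_eq_canonicalRep_iff {a b : ℕ × ℕ} :
    canonicalRep a = canonicalRep b ↔
      a = b ∨ (a.2 = 0 ∧ b.1 = 0 ∧ a.1 = b.2) ∨ (a.1 = 0 ∧ b.2 = 0 ∧ a.2 = b.1) := by
  obtain ⟨p, q⟩ := a
  obtain ⟨r, s⟩ := b
  simp only [canonicalRep]
  split_ifs <;> simp only [Prod.mk.injEq] <;> grind

/-- The section of `W` obtained by inverting its three linear pieces. On the ray
`{x = 0, 0 ≤ y}`, where two of the inverses differ, it takes values in the axis `p = 0`.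
In each branch the arguments of `Int.toNat` are nonnegative. -/
def canonicalPreimage (v : ℤ × ℤ) : ℕ × ℕ :=
  if 0 ≤ v.1 ∧ 0 ≤ v.2 then (v.1.toNat, (v.2 + 2 * v.1).toNat)
  else if v.1 < 0 ∧ 3 * v.1 ≤ v.2 then ((v.2 - 5 * v.1).toNat, (-v.1).toNat)
  else ((v.1 - v.2).toNat, (2 * v.1 - v.2).toNat)

theorem canonicalPreimage_of_nonneg {x y : ℤ} (hx : 0 ≤ x) (hy : 0 ≤ y) :
    canonicalPreimage (x, y) = (x.toNat, (y + 2 * x).toNat) :=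
  if_pos ⟨hx, hy⟩

theorem canonicalPreimage_of_neg {x y : ℤ} (hx : x < 0) (hxy : 3 * x ≤ y) :
    canonicalPreimage (x, y) = ((y - 5 * x).toNat, (-x).toNat) :=
  (if_neg fun h => hx.not_ge h.1).trans (if_pos ⟨hx, hxy⟩)

theorem canonicalPreimage_of_nonpos {x y : ℤ} (hy : y ≤ 0) (hxy : y ≤ 3 * x) :
    canonicalPreimage (x, y) = ((x - y).toNat, (2 * x - y).toNat) := by
  unfold canonicalPreimage
  split_ifs <;> ext <;> dsimp only at * <;> omega

theorem rightInverse_canonicalPreimage : Function.RightInverse canonicalPreimage Wmap := by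
  rintro ⟨x, y⟩
  obtain ⟨hx, hy⟩ | ⟨hx, hxy⟩ | ⟨hy, hxy⟩ :
      (0 ≤ x ∧ 0 ≤ y) ∨ (x < 0 ∧ 3 * x ≤ y) ∨ (y ≤ 0 ∧ y ≤ 3 * x) := by omega
  · rw [canonicalPreimage_of_nonneg hx hy, apply_of_two_mul_fst_le (by omega)]
    ext <;> dsimp only <;> omega
  · rw [canonicalPreimage_of_neg hx hxy, apply_of_two_mul_snd_le (by omega)]
    ext <;> dsimp only <;> omega
  · rw [canonicalPreimage_of_nonpos hy hxy, apply_of_le_two_mul (by omega) (by omega)]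
    ext <;> dsimp only <;> omega

theorem canonicalPreimage_apply (a : ℕ × ℕ) : canonicalPreimage (Wmap a) = canonicalRep a := by
  obtain ⟨p, q⟩ := a
  rcases Nat.eq_zero_or_pos q with rfl | hq
  · rw [apply_fst_axis, canonicalPreimage_of_nonneg le_rfl p.cast_nonneg]
    simp [canonicalRep]
  have canonicalRep_eq : canonicalRep (p, q) = (p, q) := if_neg hq.ne'
  rw [canonicalRep_eq]
  obtain h | ⟨hpq, hqp⟩ | h : 2 * q ≤ p ∨ (p ≤ 2 * q ∧ q ≤ 2 * p) ∨ 2 * p ≤ q := by omega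
  · rw [apply_of_two_mul_snd_le h, canonicalPreimage_of_neg (by omega) (by omega)]
    ext <;> dsimp only <;> omega
  · rw [apply_of_le_two_mul hpq hqp, canonicalPreimage_of_nonpos (by omega) (by omega)]
    ext <;> dsimp only <;> omega
  · rw [apply_of_two_mul_fst_le h, canonicalPreimage_of_nonneg (by omega) (by omega)]
    ext <;> dsimp only <;> omega

theorem canonicalRep_eq_of_apply_eq {a b : ℕ × ℕ} (h : Wmap a = Wmap b) :
    canonicalRep a = canonicalRep b := by
  rw [← canonicalPreimage_apply, h, canonicalPreimage_apply]

end Wmap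

/-- (i) The three defining formulas of `W` agree on the overlaps of their domains
(when `p = 2q` and when `q = 2p`), so `W` is well defined; (ii) `W (p, 0) = W (0, p)
= (0, p)` for all `p`; (iii) `W` descends to a bijection from the quotient of
`ℕ × ℕ` by the identifications `(p, 0) ∼ (0, p)` onto `ℤ × ℤ`. -/
theorem Wmap_well_defined_and_bijective :
    -- (i) the formulas agree on overlaps
    (∀ p q : ℕ, p = 2 * q →
      ((-(q : ℤ), (p : ℤ) - 5 * (q : ℤ)) : ℤ × ℤ) =
        ((q : ℤ) - (p : ℤ), (q : ℤ) - 2 * (p : ℤ))) ∧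
    (∀ p q : ℕ, q = 2 * p →
      (((q : ℤ) - (p : ℤ), (q : ℤ) - 2 * (p : ℤ)) : ℤ × ℤ) =
        ((p : ℤ), (q : ℤ) - 2 * (p : ℤ))) ∧
    -- (ii) boundary values
    (∀ p : ℕ, Wmap (p, 0) = ((0 : ℤ), (p : ℤ)) ∧ Wmap (0, p) = ((0 : ℤ), (p : ℤ))) ∧
    -- (iii) W descends to a bijection from (ℕ × ℕ)/((p,0) ∼ (0,p)) onto ℤ × ℤ
    (∀ a b : ℕ × ℕ, Wmap a = Wmap b →
      (a = b ∨ (a.2 = 0 ∧ b.1 = 0 ∧ a.1 = b.2) ∨ (a.1 = 0 ∧ b.2 = 0 ∧ a.2 = b.1))) ∧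
    Function.Surjective Wmap := by
  refine ⟨fun p q h => ?_, fun p q h => ?_, fun p => ?_, fun a b h => ?_, ?_⟩
  · exact Wmap.formulas_agree_of_fst_eq_two_mul_snd (mod_cast h)
  · exact Wmap.formulas_agree_of_snd_eq_two_mul_fst (mod_cast h)
  · exact ⟨Wmap.apply_fst_axis p, Wmap.apply_snd_axis p⟩
  · exact Wmap.canonicalRep_eq_canonicalRep_iff.mp (Wmap.canonicalRep_eq_of_apply_eq h)
  · exact Wmap.rightInverse_canonicalPreimage.surjective
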